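/- Let Γ = (V,E) be a simple finite connected graph, q : V → ℝ a potential, and H(Γ) = Q − C the discrete Schrödinger operator, where Q = diag(q) and C is the adjacency matrix of Γ. Let β = |E| − |V| + 1, fix a spanning tree of Γ, and let S = {e_1, …, e_β} be the edges not in the tree, with e_j = (u_j, v_j), u_j < v_j. For α = (α_1,…,α_β) ∈ ℝ^β let H(Γ^α_mag) be the Hermitian matrix with diagonal entries q_u, entries −1 at positions (u,v),(v,u) for edges (u,v) ∈ E∖S, entries −e^{iα_j} at (u_j,v_j) and −e^{−iα_j} at (v_j,u_j) for e_j ∈ S, and 0 elsewhere. Suppose λ_n(H(Γ)) (the n-th smallest eigenvalue) is simple and its eigenvector f is nonzero at every vertex; let φ be the number of edges (u,v) ∈ E with f_u f_v < 0. Then α = 0 is a critical point of the function α ↦ λ_n(H(Γ^α_mag)), and the Morse index of this critical point (the number of negative eigenvalues of the Hessian at 0) equals the nodal surplus σ = φ − (n − 1). -/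

import Mathlib

open Matrix

/-- The eigenvalues of a Hermitian matrix, sorted in increasing order and counted with
multiplicity (junk value `0` if the matrix is not Hermitian); `sE M i` is the `i`-th sorted
eigenvalue, 0-based, with junk value `0` out of range. -/
noncomputable def sortedEigs {𝕜 : Type*} [RCLike 𝕜] {d : ℕ} (M : Matrix (Fin d) (Fin d) 𝕜) :
    Fin d → ℝ :=
  if h : M.IsHermitian then h.eigenvalues ∘ Tuple.sort h.eigenvalues else 0

noncomputable def sE {𝕜 : Type*} [RCLike 𝕜] {d : ℕ} (M : Matrix (Fin d) (Fin d) 𝕜)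
    (i : ℕ) : ℝ :=
  if h : i < d then sortedEigs M ⟨i, h⟩ else 0

/-- The discrete Schrödinger operator `H(Γ) = Q - C` of a graph `G` with potential `q`. -/
noncomputable def schrodOp {N : ℕ} (G : SimpleGraph (Fin N)) [DecidableRel G.Adj]
    (q : Fin N → ℝ) : Matrix (Fin N) (Fin N) ℝ :=
  Matrix.diagonal q - G.adjMatrix ℝ

/-- The cut operator `H(Γ^cut_γ)`: for each `j`, the matrix entries at `(uE j, vE j)` and
`(vE j, uE j)` (equal to `-1` in `H(Γ)`) are replaced by `0` and the diagonal entries at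
`uE j`, `vE j` are decreased by `γ j` and `(γ j)⁻¹` respectively. -/
noncomputable def schrodCut {N β : ℕ} (G : SimpleGraph (Fin N)) [DecidableRel G.Adj]
    (q : Fin N → ℝ) (uE vE : Fin β → Fin N) (γ : Fin β → ℝ) :
    Matrix (Fin N) (Fin N) ℝ :=
  schrodOp G q - ∑ j : Fin β, Matrix.of (fun a b =>
    if a = uE j ∧ b = uE j then γ j
    else if a = vE j ∧ b = vE j then (γ j)⁻¹
    else if (a = uE j ∧ b = vE j) ∨ (a = vE j ∧ b = uE j) then -1
    else 0)

/-- The magnetic operator `H(Γ^α_mag)`: the entries of `H(Γ)` at `(uE j, vE j)` and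
`(vE j, uE j)` (equal to `-1`) are replaced by `-exp(i α j)` and `-exp(-i α j)`. -/
noncomputable def schrodMag {N β : ℕ} (G : SimpleGraph (Fin N)) [DecidableRel G.Adj]
    (q : Fin N → ℝ) (uE vE : Fin β → Fin N) (α : Fin β → ℝ) :
    Matrix (Fin N) (Fin N) ℂ :=
  (schrodOp G q).map (fun x => (x : ℂ)) + ∑ j : Fin β, Matrix.of (fun a b =>
    if a = uE j ∧ b = vE j then 1 - Complex.exp (Complex.I * (α j : ℝ))
    else if a = vE j ∧ b = uE j then 1 - Complex.exp (-(Complex.I * (α j : ℝ)))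
    else 0)

/-- The number of sign changes ("zeros") of a vertex function `f`: the number of edges of `G`
at whose endpoints `f` has different signs. -/
noncomputable def signChanges {N : ℕ} (G : SimpleGraph (Fin N)) (f : Fin N → ℝ) : ℕ :=
  {e : Sym2 (Fin N) | e ∈ G.edgeSet ∧ ∀ u v : Fin N, e = s(u, v) → f u * f v < 0}.ncard

/-- The Hessian matrix of second partial derivatives of `f : ℝ^k → ℝ` at `x₀`, and the number
of its negative eigenvalues (the Morse index of a critical point). -/
noncomputable def hessMat {k : ℕ} (f : (Fin k → ℝ) → ℝ) (x₀ : Fin k → ℝ) :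
    Matrix (Fin k) (Fin k) ℝ :=
  Matrix.of fun i j => fderiv ℝ (fun x => fderiv ℝ f x (Pi.single j 1)) x₀ (Pi.single i 1)

noncomputable def negEigCount {k : ℕ} (M : Matrix (Fin k) (Fin k) ℝ) : ℕ :=
  {i : Fin k | sortedEigs M i < 0}.ncard

/-!
Substituting `f * η` turns the quadratic form of `H - λ_n` into the weighted sum of squares of the
differences `η u - η v` over the edges, with weights `-H u v * f u * f v` (the ground state
representation). By second order perturbation theory, the Hessian of `λ_n` in the direction `a`
is, up to the factor `‖f‖² / 2`, the same weighted sum of squares evaluated at `dθ - B`, where `B`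
is the magnetic potential of `a` and `f * θ` is the imaginary first order change of the
eigenvector; the eigenvalue equation says that `dθ - B` is orthogonal to every coboundary `dη`.
Since coboundaries and fluxes together span all antisymmetric functions on the edges, the weighted
sum of squares on `ℝ^E` is the orthogonal sum of `H - λ_n`, of negative index `n - 1`, and of the
Hessian. By Sylvester's law of inertia its negative index is the number of negative weights, which
is `φ`.
-/

open Filter Topology

section SortedEigenvalues

variable {𝕜 : Type*} [RCLike 𝕜] {d : ℕ} {M M' U U' : Matrix (Fin d) (Fin d) 𝕜}

lemma sortedEigs_monotone (M : Matrix (Fin d) (Fin d) 𝕜) : Monotone (sortedEigs M) := by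
  unfold sortedEigs
  split_ifs with hM
  · exact Tuple.monotone_sort hM.eigenvalues
  · exact monotone_const

lemma exists_unitary_diagonalization (hM : M.IsHermitian) :
    ∃ U ∈ unitaryGroup (Fin d) 𝕜,
      M = star U * diagonal (fun i => (sortedEigs M i : 𝕜)) * U := by
  set σ := Tuple.sort hM.eigenvalues
  set V := (hM.eigenvectorUnitary : Matrix (Fin d) (Fin d) 𝕜)
  have hV : V * star V = 1 := mem_unitaryGroup_iff.mp hM.eigenvectorUnitary.2
  have hspec : M = V * diagonal (fun i => (hM.eigenvalues i : 𝕜)) * star V := by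
    simpa [Unitary.conjStarAlgAut_apply, Function.comp_def] using hM.spectral_theorem
  have hsorted : diagonal (fun i => (sortedEigs M i : 𝕜)) =
      (diagonal (fun i => (hM.eigenvalues i : 𝕜))).submatrix σ σ := by
    rw [submatrix_diagonal_equiv, sortedEigs, dif_pos hM]
    rfl
  have hstar : star ((star V).submatrix σ id) = V.submatrix id σ := by
    simp [star_eq_conjTranspose]
  refine ⟨(star V).submatrix σ id, ?_, ?_⟩
  · rw [mem_unitaryGroup_iff', hstar, submatrix_mul_equiv, hV, submatrix_id_id]
  · rw [hsorted, hstar, submatrix_mul_equiv, submatrix_mul_equiv]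
    exact hspec

lemma mulVec_unitary_diagonalization {l : Fin d → ℝ} (hU : U ∈ unitaryGroup (Fin d) 𝕜)
    (hM : M = star U * diagonal (fun i => (l i : 𝕜)) * U) (x : Fin d → 𝕜) (i : Fin d) :
    (U *ᵥ (M *ᵥ x)) i = l i * (U *ᵥ x) i := by
  rw [mulVec_mulVec, hM, ← mul_assoc, ← mul_assoc, mem_unitaryGroup_iff.mp hU, one_mul,
    ← mulVec_mulVec, mulVec_diagonal]

lemma star_dotProduct_mulVec_unitary_diagonalization {l : Fin d → ℝ}
    (hM : M = star U * diagonal (fun i => (l i : 𝕜)) * U) (x : Fin d → 𝕜) :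
    star x ⬝ᵥ M *ᵥ x = ((∑ i, l i * ‖(U *ᵥ x) i‖ ^ 2 : ℝ) : 𝕜) := by
  have hstar : star x ᵥ* star U = star (U *ᵥ x) := (star_mulVec U x).symm
  rw [hM, ← mulVec_mulVec, ← mulVec_mulVec, dotProduct_mulVec, hstar]
  push_cast
  refine Finset.sum_congr rfl fun i _ => ?_
  rw [mulVec_diagonal, Pi.star_apply, ← RCLike.conj_mul]
  simp only [RCLike.star_def]
  ring

lemma sum_norm_sq_unitary_mulVec (hU : U ∈ unitaryGroup (Fin d) 𝕜) (x : Fin d → 𝕜) :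
    ∑ i, ‖(U *ᵥ x) i‖ ^ 2 = ∑ i, ‖x i‖ ^ 2 := by
  have hone : (1 : Matrix (Fin d) (Fin d) 𝕜) =
      star U * diagonal (fun _ => ((1 : ℝ) : 𝕜)) * U := by
    simp [mem_unitaryGroup_iff'.mp hU]
  have h := star_dotProduct_mulVec_unitary_diagonalization hone x
  simp only [one_mulVec, one_mul, dotProduct, Pi.star_apply, RCLike.star_def,
    RCLike.conj_mul] at h
  exact_mod_cast h.symm

lemma unitary_mulVec_injective (hU : U ∈ unitaryGroup (Fin d) 𝕜) :
    Function.Injective (U *ᵥ ·) :=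
  mulVec_injective_of_isUnit (IsUnit.of_mul_eq_one _ (mem_unitaryGroup_iff.mp hU))

lemma exists_ne_zero_mulVec_eq_zero_of_lt_of_gt (U U' : Matrix (Fin d) (Fin d) 𝕜) (k : Fin d) :
    ∃ x ≠ 0, (∀ i < k, (U *ᵥ x) i = 0) ∧ ∀ i > k, (U' *ᵥ x) i = 0 := by
  let W : Matrix (Fin d) (Fin d) 𝕜 :=
    of fun i => if i < k then U i else if k < i then U' i else 0
  have hdet : W.det = 0 := det_eq_zero_of_row_eq_zero k fun j => by simp [W]
  obtain ⟨x, hx0, hx⟩ := exists_mulVec_eq_zero_iff.mpr hdet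
  refine ⟨x, hx0, fun i hi => ?_, fun i hi => ?_⟩
  · simpa [W, mulVec, hi] using congrFun hx i
  · simpa [W, mulVec, hi, hi.not_gt] using congrFun hx i

/-- The min-max principle enters through a dimension count: some nonzero vector has `M`-energy at
least `sortedEigs M k` and `M'`-energy at most `sortedEigs M' k`. -/
lemma sortedEigs_le_add (hM : M.IsHermitian) (hM' : M'.IsHermitian) {ε : ℝ}
    (h : ∀ x : Fin d → 𝕜, RCLike.re (star x ⬝ᵥ M *ᵥ x) ≤
      RCLike.re (star x ⬝ᵥ M' *ᵥ x) + ε * ∑ i, ‖x i‖ ^ 2) (k : Fin d) :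
    sortedEigs M k ≤ sortedEigs M' k + ε := by
  obtain ⟨U, hU, hMU⟩ := exists_unitary_diagonalization hM
  obtain ⟨U', hU', hMU'⟩ := exists_unitary_diagonalization hM'
  obtain ⟨x, hx0, hlow, hhigh⟩ := exists_ne_zero_mulVec_eq_zero_of_lt_of_gt U U' k
  have hpos : 0 < ∑ i, ‖x i‖ ^ 2 := by
    obtain ⟨i, hi⟩ := Function.ne_iff.mp hx0
    exact Finset.sum_pos' (fun _ _ => by positivity)
      ⟨i, Finset.mem_univ i, by have := norm_pos_iff.mpr hi; positivity⟩
  refine le_of_mul_le_mul_right ?_ hpos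
  calc sortedEigs M k * ∑ i, ‖x i‖ ^ 2
      = ∑ i, sortedEigs M k * ‖(U *ᵥ x) i‖ ^ 2 := by
        rw [← sum_norm_sq_unitary_mulVec hU x, Finset.mul_sum]
    _ ≤ ∑ i, sortedEigs M i * ‖(U *ᵥ x) i‖ ^ 2 := Finset.sum_le_sum fun i _ => by
        rcases lt_or_ge i k with hi | hi
        · simp [hlow i hi]
        · gcongr
          exact sortedEigs_monotone M hi
    _ = RCLike.re (star x ⬝ᵥ M *ᵥ x) := by
        rw [star_dotProduct_mulVec_unitary_diagonalization hMU, RCLike.ofReal_re]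
    _ ≤ RCLike.re (star x ⬝ᵥ M' *ᵥ x) + ε * ∑ i, ‖x i‖ ^ 2 := h x
    _ = ∑ i, sortedEigs M' i * ‖(U' *ᵥ x) i‖ ^ 2 + ε * ∑ i, ‖x i‖ ^ 2 := by
        rw [star_dotProduct_mulVec_unitary_diagonalization hMU', RCLike.ofReal_re]
    _ ≤ ∑ i, sortedEigs M' k * ‖(U' *ᵥ x) i‖ ^ 2 + ε * ∑ i, ‖x i‖ ^ 2 := by
        gcongr ?_ + _
        refine Finset.sum_le_sum fun i _ => ?_
        rcases lt_or_ge k i with hi | hi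
        · simp [hhigh i hi]
        · gcongr
          exact sortedEigs_monotone M' hi
    _ = (sortedEigs M' k + ε) * ∑ i, ‖x i‖ ^ 2 := by
        rw [← Finset.mul_sum, sum_norm_sq_unitary_mulVec hU', add_mul]

lemma re_star_dotProduct_mulVec_le (A : Matrix (Fin d) (Fin d) 𝕜) (x : Fin d → 𝕜) :
    RCLike.re (star x ⬝ᵥ A *ᵥ x) ≤ (∑ i, ∑ j, ‖A i j‖) * ∑ i, ‖x i‖ ^ 2 := by
  have hcoord (i : Fin d) : ‖x i‖ ^ 2 ≤ ∑ i, ‖x i‖ ^ 2 :=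
    Finset.single_le_sum (f := fun i => ‖x i‖ ^ 2) (fun _ _ => by positivity) (Finset.mem_univ i)
  have hpair (i j : Fin d) : ‖x i‖ * ‖x j‖ ≤ ∑ i, ‖x i‖ ^ 2 := by
    nlinarith [two_mul_le_add_sq ‖x i‖ ‖x j‖, hcoord i, hcoord j]
  calc RCLike.re (star x ⬝ᵥ A *ᵥ x)
      ≤ ‖∑ i, ∑ j, star (x i) * (A i j * x j)‖ := by
        simpa [dotProduct, mulVec, Finset.mul_sum] using RCLike.re_le_norm (star x ⬝ᵥ A *ᵥ x)
    _ ≤ ∑ i, ∑ j, ‖star (x i) * (A i j * x j)‖ :=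
        norm_sum_le_of_le _ fun i _ => norm_sum_le _ _
    _ ≤ ∑ i, ∑ j, ‖A i j‖ * ∑ i, ‖x i‖ ^ 2 := by
        refine Finset.sum_le_sum fun i _ => Finset.sum_le_sum fun j _ => ?_
        rw [norm_mul, norm_mul, norm_star, mul_left_comm]
        gcongr
        exact hpair i j
    _ = (∑ i, ∑ j, ‖A i j‖) * ∑ i, ‖x i‖ ^ 2 := by simp only [Finset.sum_mul]

lemma abs_sortedEigs_sub_le (hM : M.IsHermitian) (hM' : M'.IsHermitian) (k : Fin d) :
    |sortedEigs M k - sortedEigs M' k| ≤ ∑ i, ∑ j, ‖(M - M') i j‖ := by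
  have hle {A A' : Matrix (Fin d) (Fin d) 𝕜} (hA : A.IsHermitian) (hA' : A'.IsHermitian) :
      sortedEigs A k - sortedEigs A' k ≤ ∑ i, ∑ j, ‖(A - A') i j‖ := by
    refine sub_le_iff_le_add'.mpr (sortedEigs_le_add hA hA' (fun x => ?_) k)
    have h := re_star_dotProduct_mulVec_le (A - A') x
    rw [sub_mulVec, dotProduct_sub, map_sub] at h
    linarith
  rw [abs_sub_le_iff]
  refine ⟨hle hM hM', (hle hM' hM).trans_eq ?_⟩
  simp only [Matrix.sub_apply, norm_sub_rev]

lemma continuousAt_sortedEigs {P : Type*} [TopologicalSpace P]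
    {M : P → Matrix (Fin d) (Fin d) 𝕜} {p₀ : P} (hM : ∀ p, (M p).IsHermitian)
    (hc : ContinuousAt M p₀) (k : Fin d) :
    ContinuousAt (fun p => sortedEigs (M p) k) p₀ := by
  have hbound : ContinuousAt (fun p => ∑ i, ∑ j, ‖(M p - M p₀) i j‖) p₀ := by
    fun_prop
  rw [ContinuousAt, tendsto_iff_dist_tendsto_zero]
  refine squeeze_zero (fun _ => dist_nonneg) (fun p => ?_) (by simpa [ContinuousAt] using hbound)
  exact abs_sortedEigs_sub_le (hM p) (hM p₀) k

lemma exists_sortedEigs_eq (hM : M.IsHermitian) {x : Fin d → 𝕜} (hx : x ≠ 0) {μ : 𝕜}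
    (h : M *ᵥ x = μ • x) : ∃ i, (sortedEigs M i : 𝕜) = μ := by
  obtain ⟨U, hU, hMU⟩ := exists_unitary_diagonalization hM
  have hUx : U *ᵥ x ≠ 0 := fun h0 =>
    hx (unitary_mulVec_injective hU (h0.trans (mulVec_zero U).symm))
  obtain ⟨i, hi⟩ := Function.ne_iff.mp hUx
  have heig := mulVec_unitary_diagonalization hU hMU x i
  rw [h, mulVec_smul, Pi.smul_apply, smul_eq_mul] at heig
  exact ⟨i, (mul_right_cancel₀ hi heig).symm⟩

lemma eq_of_sortedEigs_eq_of_finrank_eigenspace_le_one (hM : M.IsHermitian) {k : Fin d}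
    (hk : Module.finrank 𝕜 (Module.End.eigenspace (toLin' M) (sortedEigs M k : 𝕜)) ≤ 1)
    {i : Fin d} (hi : sortedEigs M i = sortedEigs M k) : i = k := by
  obtain ⟨U, hU, hMU⟩ := exists_unitary_diagonalization hM
  have hstar (y : Fin d → 𝕜) : U *ᵥ (star U *ᵥ y) = y := by
    rw [mulVec_mulVec, mem_unitaryGroup_iff.mp hU, one_mulVec]
  have hcol (j : Fin d) (hj : sortedEigs M j = sortedEigs M k) : star U *ᵥ Pi.single j 1 ∈
      Module.End.eigenspace (toLin' M) (sortedEigs M k : 𝕜) := by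
    rw [Module.End.mem_eigenspace_iff, toLin'_apply]
    refine unitary_mulVec_injective hU (funext fun m => ?_)
    beta_reduce
    rw [mulVec_unitary_diagonalization hU hMU, mulVec_smul, Pi.smul_apply, smul_eq_mul, hstar]
    obtain rfl | hm := eq_or_ne m j
    · rw [hj]
    · simp [hm]
  obtain ⟨v, hv⟩ := finrank_le_one_iff.mp hk
  have hmul (j : Fin d) (hj : sortedEigs M j = sortedEigs M k) :
      ∃ c : 𝕜, c • (U *ᵥ v) = Pi.single j 1 := by
    obtain ⟨c, hc⟩ := hv ⟨_, hcol j hj⟩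
    refine ⟨c, ?_⟩
    rw [← mulVec_smul, ← hstar (Pi.single j 1)]
    exact congrArg (U *ᵥ ·) (congrArg Subtype.val hc)
  obtain ⟨a, ha⟩ := hmul i hi
  obtain ⟨b, hb⟩ := hmul k rfl
  by_contra hik
  have ha_ne : a ≠ 0 := by
    rintro rfl
    simpa using congrFun ha i
  have hv_k : (U *ᵥ v) k = 0 := by
    simpa [ha_ne, Ne.symm hik] using congrFun ha k
  simpa [hv_k] using congrFun hb k

lemma sortedEigs_map_ofReal {M : Matrix (Fin d) (Fin d) ℝ} (hM : M.IsHermitian) :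
    sortedEigs (M.map ((↑) : ℝ → 𝕜)) = sortedEigs M := by
  have hMc : (M.map ((↑) : ℝ → 𝕜)).IsHermitian := hM.map _ fun x => by simp
  have hcharpoly : (M.map ((↑) : ℝ → 𝕜)).charpoly.roots =
      M.charpoly.roots.map (algebraMap ℝ 𝕜) := by
    rw [← hM.splits_charpoly.roots_map (algebraMap ℝ 𝕜), ← charpoly_map]
  have heig : hMc.eigenvalues = hM.eigenvalues := by
    suffices hMc.eigenvalues₀ = hM.eigenvalues₀ from
      funext fun i => congrFun this _
    rw [← List.ofFn_inj, ← IsHermitian.sort_roots_charpoly_eq_eigenvalues₀,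
      ← IsHermitian.sort_roots_charpoly_eq_eigenvalues₀, hcharpoly, Multiset.map_map]
    exact congrArg _ (Multiset.map_congr rfl fun x _ => by simp)
  simp only [sortedEigs, dif_pos hMc, dif_pos hM, heig]

end SortedEigenvalues

section SimpleEigenvalue

variable {𝕜 : Type*} [RCLike 𝕜] {d : ℕ}

/-- The defect of `y = (eigenvector, eigenvalue)` in the eigenvalue equation of `A`, bordered by the
functional `star f ⬝ᵥ ·`, whose prescribed value fixes the normalization of the eigenvector. -/
def eigenDefect (f : Fin d → 𝕜) (A : Matrix (Fin d) (Fin d) 𝕜) (y : (Fin d → 𝕜) × 𝕜) :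
    (Fin d → 𝕜) × 𝕜 :=
  (A *ᵥ y.1 - y.2 • y.1, star f ⬝ᵥ y.1)

lemma exists_hasFDerivAt_eigenDefect (f : Fin d → 𝕜) (A : Matrix (Fin d) (Fin d) 𝕜)
    (y : (Fin d → 𝕜) × 𝕜) :
    ∃ D : (Fin d → 𝕜) × 𝕜 →L[ℝ] (Fin d → 𝕜) × 𝕜, HasFDerivAt (eigenDefect f A) D y ∧
      ∀ z, D z = (A *ᵥ z.1 - (y.2 • z.1 + z.2 • y.1), star f ⬝ᵥ z.1) := by
  let mulA : (Fin d → 𝕜) →L[ℝ] Fin d → 𝕜 :=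
    (A.mulVecLin.restrictScalars ℝ).toContinuousLinearMap
  let dotF : (Fin d → 𝕜) →L[ℝ] 𝕜 :=
    ((dotProductBilin 𝕜 𝕜 (star f)).restrictScalars ℝ).toContinuousLinearMap
  have hfst : HasFDerivAt (fun z : (Fin d → 𝕜) × 𝕜 => z.1) (.fst ℝ _ _) y := hasFDerivAt_fst
  have hsnd : HasFDerivAt (fun z : (Fin d → 𝕜) × 𝕜 => z.2) (.snd ℝ _ _) y := hasFDerivAt_snd
  exact ⟨_, ((mulA.hasFDerivAt.comp y hfst).sub (hsnd.smul hfst)).prodMk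
    (dotF.hasFDerivAt.comp y hfst), fun z => rfl⟩

lemma contDiffAt_eigenDefect {P : Type*} [NormedAddCommGroup P] [NormedSpace ℝ P]
    {n : WithTop ℕ∞} {M : P → Matrix (Fin d) (Fin d) 𝕜} {p₀ : P}
    (hM : ∀ i j, ContDiffAt ℝ n (fun p => M p i j) p₀) (f : Fin d → 𝕜)
    (y : (Fin d → 𝕜) × 𝕜) :
    ContDiffAt ℝ n (fun q : P × ((Fin d → 𝕜) × 𝕜) => eigenDefect f (M q.1) q.2) (p₀, y) := by
  have (i j : Fin d) :
      ContDiffAt ℝ n (fun q : P × ((Fin d → 𝕜) × 𝕜) => M q.1 i j) (p₀, y) :=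
    (hM i j).comp (p₀, y) contDiffAt_fst
  refine ContDiffAt.prodMk (contDiffAt_pi.mpr fun i => ?_) ?_
  · simp only [mulVec, dotProduct, Pi.sub_apply, Pi.smul_apply, smul_eq_mul]
    fun_prop
  · simp only [dotProduct]
    fun_prop

lemma star_unitary_mulVec_dotProduct {U : Matrix (Fin d) (Fin d) 𝕜}
    (hU : U ∈ unitaryGroup (Fin d) 𝕜) (x y : Fin d → 𝕜) :
    star (U *ᵥ x) ⬝ᵥ (U *ᵥ y) = star x ⬝ᵥ y := by
  rw [star_mulVec, ← dotProduct_mulVec, mulVec_mulVec, ← star_eq_conjTranspose,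
    mem_unitaryGroup_iff'.mp hU, one_mulVec]

lemma bordered_eigenEquation_injective {M : Matrix (Fin d) (Fin d) 𝕜} (hM : M.IsHermitian)
    {k : Fin d} (hk : ∀ i, sortedEigs M i = sortedEigs M k → i = k) {f : Fin d → 𝕜} (hf : f ≠ 0)
    (heig : M *ᵥ f = (sortedEigs M k : 𝕜) • f) {g : Fin d → 𝕜} {m : 𝕜}
    (hg : M *ᵥ g - ((sortedEigs M k : 𝕜) • g + m • f) = 0) (hfg : star f ⬝ᵥ g = 0) :
    g = 0 ∧ m = 0 := by
  obtain ⟨U, hU, hMU⟩ := exists_unitary_diagonalization hM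
  have hgap {i : Fin d} (hi : i ≠ k) : (sortedEigs M i : 𝕜) ≠ sortedEigs M k := fun h =>
    hi (hk i (RCLike.ofReal_injective h))
  have hf_off {i : Fin d} (hi : i ≠ k) : (U *ᵥ f) i = 0 := by
    have h := mulVec_unitary_diagonalization hU hMU f i
    rw [heig, mulVec_smul, Pi.smul_apply, smul_eq_mul, mul_eq_mul_right_iff] at h
    exact h.resolve_left (hgap hi).symm
  have hf_on : (U *ᵥ f) k ≠ 0 := fun hfk => hf <| unitary_mulVec_injective hU <| by
    funext i
    by_cases hi : i = k
    · simpa [hi] using hfk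
    · simpa using hf_off hi
  have hcoord (i : Fin d) : sortedEigs M i * (U *ᵥ g) i =
      sortedEigs M k * (U *ᵥ g) i + m * (U *ᵥ f) i := by
    rw [← mulVec_unitary_diagonalization hU hMU, sub_eq_zero.mp hg]
    simp only [mulVec_add, mulVec_smul, Pi.add_apply, Pi.smul_apply, smul_eq_mul]
  have hm : m = 0 := by simpa [hf_on] using hcoord k
  have hg_off {i : Fin d} (hi : i ≠ k) : (U *ᵥ g) i = 0 := by
    simpa [hm, hgap hi] using hcoord i
  have hg_on : (U *ᵥ g) k = 0 := by
    rw [← star_unitary_mulVec_dotProduct hU, dotProduct, Finset.sum_eq_single k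
      (fun i _ hi => by simp [hg_off hi]) (by simp)] at hfg
    simpa [hf_on] using hfg
  refine ⟨unitary_mulVec_injective hU (funext fun i => ?_), hm⟩
  by_cases hi : i = k
  · simpa [hi] using hg_on
  · simpa using hg_off hi

variable {P : Type*} {M : P → Matrix (Fin d) (Fin d) 𝕜} {p₀ : P} {k : Fin d}

lemma eventually_sortedEigs_eq [TopologicalSpace P] (hM : ∀ p, (M p).IsHermitian)
    (hcont : ContinuousAt M p₀)
    (hk : ∀ i, sortedEigs (M p₀) i = sortedEigs (M p₀) k → i = k)
    {g : P → Fin d → 𝕜} {m : P → 𝕜} (hg : ContinuousAt g p₀) (hm : ContinuousAt m p₀)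
    (hg₀ : g p₀ ≠ 0) (hm₀ : m p₀ = sortedEigs (M p₀) k)
    (heig : ∀ᶠ p in 𝓝 p₀, M p *ᵥ g p = m p • g p) :
    ∀ᶠ p in 𝓝 p₀, (sortedEigs (M p) k : 𝕜) = m p := by
  have hother : ∀ᶠ p in 𝓝 p₀, ∀ i ≠ k, (sortedEigs (M p) i : 𝕜) ≠ m p := by
    refine eventually_all.mpr fun i => ?_
    by_cases hi : i = k
    · simp [hi]
    have hi₀ : (sortedEigs (M p₀) i : 𝕜) ≠ m p₀ := by
      rw [hm₀]
      exact fun h => hi (hk i (RCLike.ofReal_injective h))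
    have hcont_i : ContinuousAt (fun p => (sortedEigs (M p) i : 𝕜)) p₀ :=
      RCLike.continuous_ofReal.continuousAt.comp (continuousAt_sortedEigs hM hcont i)
    filter_upwards [hcont_i.ne_iff_eventually_ne hm |>.mp hi₀] with p hp _ using hp
  filter_upwards [heig, hg.eventually_ne hg₀, hother] with p hp hgp hp_other
  obtain ⟨i, hi⟩ := exists_sortedEigs_eq (hM p) hgp hp
  obtain rfl : i = k := by_contra fun hik => hp_other i hik hi
  exact hi

theorem exists_contDiffAt_eigenpair [NormedAddCommGroup P] [NormedSpace ℝ P] [CompleteSpace P]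
    {n : WithTop ℕ∞} (hn : n ≠ 0) (hM : ∀ p, (M p).IsHermitian)
    (hsmooth : ∀ i j, ContDiffAt ℝ n (fun p => M p i j) p₀)
    (hk : ∀ i, sortedEigs (M p₀) i = sortedEigs (M p₀) k → i = k) {f : Fin d → 𝕜} (hf : f ≠ 0)
    (heig : M p₀ *ᵥ f = (sortedEigs (M p₀) k : 𝕜) • f) :
    ∃ g : P → Fin d → 𝕜, ContDiffAt ℝ n g p₀ ∧ g p₀ = f ∧
      ContDiffAt ℝ n (fun p => sortedEigs (M p) k) p₀ ∧
      ∀ᶠ p in 𝓝 p₀, M p *ᵥ g p = (sortedEigs (M p) k : 𝕜) • g p := by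
  set y₀ : (Fin d → 𝕜) × 𝕜 := (f, sortedEigs (M p₀) k)
  let F : P × ((Fin d → 𝕜) × 𝕜) → (Fin d → 𝕜) × 𝕜 := fun q => eigenDefect f (M q.1) q.2
  have hF : ContDiffAt ℝ n F (p₀, y₀) := contDiffAt_eigenDefect hsmooth f y₀
  obtain ⟨D, hD, hD_apply⟩ := exists_hasFDerivAt_eigenDefect f (M p₀) y₀
  have hpartial : fderiv ℝ F (p₀, y₀) ∘L .inr ℝ P ((Fin d → 𝕜) × 𝕜) = D :=
    ((hF.differentiableAt hn).hasFDerivAt.comp y₀ (hasFDerivAt_prodMk_right p₀ y₀)).unique hD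
  have hD_inj : Function.Injective D := (injective_iff_map_eq_zero D).mpr fun z hz => by
    rw [hD_apply, Prod.mk_eq_zero] at hz
    exact Prod.mk_eq_zero.mpr (bordered_eigenEquation_injective (hM p₀) hk hf heig hz.1 hz.2)
  have hinv : (fderiv ℝ F (p₀, y₀) ∘L .inr ℝ P ((Fin d → 𝕜) × 𝕜)).IsInvertible :=
    hpartial ▸ ⟨(LinearEquiv.ofInjectiveEndo (D : _ →ₗ[ℝ] _) hD_inj).toContinuousLinearEquiv, rfl⟩
  set ψ := hF.implicitFunction hn hinv
  have hψ₀ : ψ p₀ = y₀ := hF.implicitFunction_apply_self hn hinv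
  have hψ : ContDiffAt ℝ n ψ p₀ := hF.contDiffAt_implicitFunction hn hinv
  have hψ_eig : ∀ᶠ p in 𝓝 p₀, M p *ᵥ (ψ p).1 = (ψ p).2 • (ψ p).1 := by
    filter_upwards [hF.eventually_apply_implicitFunction hn hinv] with p hp
    refine sub_eq_zero.mp ((congrArg Prod.fst hp).trans ?_)
    exact sub_eq_zero.mpr heig
  have hM_cont : ContinuousAt M p₀ :=
    continuousAt_pi.mpr fun i => continuousAt_pi.mpr fun j => (hsmooth i j).continuousAt
  have hψ_eigs : ∀ᶠ p in 𝓝 p₀, (sortedEigs (M p) k : 𝕜) = (ψ p).2 :=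
    eventually_sortedEigs_eq hM hM_cont hk hψ.fst.continuousAt hψ.snd.continuousAt
      (by simpa [hψ₀, y₀] using hf) (by simp [hψ₀, y₀]) hψ_eig
  refine ⟨fun p => (ψ p).1, hψ.fst, by simp [hψ₀, y₀], ?_, ?_⟩
  · refine (RCLike.reCLM.contDiff.contDiffAt.comp p₀ hψ.snd).congr_of_eventuallyEq ?_
    filter_upwards [hψ_eigs] with p hp
    simp [← hp]
  · filter_upwards [hψ_eig, hψ_eigs] with p hp hp_eigs
    rw [hp, hp_eigs]

end SimpleEigenvalue

section HellmannFeynman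

variable {𝕜 V : Type*} [RCLike 𝕜] [Fintype V] {A : ℝ → Matrix V V 𝕜} {A' : Matrix V V 𝕜}
  {g : ℝ → V → 𝕜} {g' : V → 𝕜} {l : ℝ → ℝ} {l' t : ℝ}

lemma hasDerivAt_dotProduct {x y : ℝ → V → 𝕜} {x' y' : V → 𝕜} (hx : HasDerivAt x x' t)
    (hy : HasDerivAt y y' t) :
    HasDerivAt (fun s => x s ⬝ᵥ y s) (x' ⬝ᵥ y t + x t ⬝ᵥ y') t := by
  simp only [dotProduct, ← Finset.sum_add_distrib]
  exact HasDerivAt.fun_sum fun u _ => (hasDerivAt_pi.mp hx u).mul (hasDerivAt_pi.mp hy u)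

lemma hasDerivAt_mulVec (hA : ∀ u v, HasDerivAt (fun s => A s u v) (A' u v) t)
    (hg : HasDerivAt g g' t) :
    HasDerivAt (fun s => A s *ᵥ g s) (A' *ᵥ g t + A t *ᵥ g') t := by
  rw [hasDerivAt_pi]
  exact fun u => hasDerivAt_dotProduct (hasDerivAt_pi.mpr (hA u)) hg

lemma eigenEquation_deriv (hA : ∀ u v, HasDerivAt (fun s => A s u v) (A' u v) t)
    (hg : HasDerivAt g g' t) (hl : HasDerivAt l l' t)
    (heig : ∀ᶠ s in 𝓝 t, A s *ᵥ g s = (l s : 𝕜) • g s) :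
    A' *ᵥ g t + A t *ᵥ g' = (l t : 𝕜) • g' + (l' : 𝕜) • g t := by
  have hl_coe : HasDerivAt (fun s => (l s : 𝕜)) (l' : 𝕜) t :=
    ((RCLike.ofRealCLM : ℝ →L[ℝ] 𝕜).hasFDerivAt (x := l t)).comp_hasDerivAt t hl
  exact (hasDerivAt_mulVec hA hg).unique ((hl_coe.fun_smul hg).congr_of_eventuallyEq heig)

theorem star_dotProduct_deriv_mulVec (hA : ∀ u v, HasDerivAt (fun s => A s u v) (A' u v) t)
    (hg : HasDerivAt g g' t) (hl : HasDerivAt l l' t) (hherm : (A t).IsHermitian)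
    (heig : ∀ᶠ s in 𝓝 t, A s *ᵥ g s = (l s : 𝕜) • g s) :
    star (g t) ⬝ᵥ A' *ᵥ g t = l' * (star (g t) ⬝ᵥ g t) := by
  have hadj : star (g t) ⬝ᵥ A t *ᵥ g' = l t * (star (g t) ⬝ᵥ g') := by
    have h := congrArg star heig.self_of_nhds
    rw [star_mulVec, hherm] at h
    rw [dotProduct_mulVec, h, star_smul, RCLike.star_def, RCLike.conj_ofReal, smul_dotProduct,
      smul_eq_mul]
  have h := congrArg (star (g t) ⬝ᵥ ·) (eigenEquation_deriv hA hg hl heig)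
  simp only [dotProduct_add, dotProduct_smul, smul_eq_mul, hadj] at h
  linear_combination h

end HellmannFeynman

section PhaseTwist

variable {V : Type*} {H B : Matrix V V ℝ}

/-- The magnetic twist of a real matrix `H` by a magnetic potential `B`: the `(u, v)` entry is
multiplied by the phase `exp (i B u v)`. It is Hermitian for symmetric `H` and antisymmetric `B`. -/
noncomputable def phaseTwist (H B : Matrix V V ℝ) : Matrix V V ℂ :=
  of fun u v => H u v * Complex.exp (Complex.I * B u v)

lemma phaseTwist_isHermitian (hH : H.IsSymm) (hB : Bᵀ = -B) : (phaseTwist H B).IsHermitian := by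
  ext u v
  have hB_uv : B v u = -B u v := congrFun (congrFun hB u) v
  simp [phaseTwist, hH.apply, hB_uv, ← Complex.exp_conj]

lemma phaseTwist_zero (H : Matrix V V ℝ) : phaseTwist H 0 = H.map ((↑) : ℝ → ℂ) := by
  ext u v
  simp [phaseTwist]

lemma hasDerivAt_phaseTwist_smul (H B : Matrix V V ℝ) (t : ℝ) (u v : V) :
    HasDerivAt (fun s : ℝ => phaseTwist H (s • B) u v)
      (Complex.I * B u v * phaseTwist H (t • B) u v) t := by
  have hexp : HasDerivAt (fun s : ℝ => Complex.exp (Complex.I * (s * B u v : ℝ)))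
      (Complex.exp (Complex.I * (t * B u v : ℝ)) * (Complex.I * (1 * B u v : ℝ))) t :=
    ((((hasDerivAt_id t).mul_const (B u v)).ofReal_comp).const_mul Complex.I).cexp
  refine (hexp.const_mul (H u v : ℂ)).congr_deriv ?_
  simp only [phaseTwist, of_apply, Matrix.smul_apply, smul_eq_mul, one_mul]
  ring

section SecondVariation

variable [Fintype V] {f : V → ℝ} {g : ℝ → V → ℂ} {l : ℝ → ℝ}

lemma mulVec_im_deriv_eigenvector (hg : DifferentiableAt ℝ g 0) (hg₀ : g 0 = fun u => (f u : ℂ))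
    (hl : DifferentiableAt ℝ l 0)
    (heig : ∀ᶠ t in 𝓝 0, phaseTwist H (t • B) *ᵥ g t = (l t : ℂ) • g t) (u : V) :
    ∑ v, B u v * H u v * f v + ∑ v, H u v * (deriv g 0 v).im = l 0 * (deriv g 0 u).im := by
  have h := congrArg Complex.im (congrFun (eigenEquation_deriv
    (hasDerivAt_phaseTwist_smul H B 0) hg.hasDerivAt hl.hasDerivAt heig) u)
  simpa [hg₀, phaseTwist, mulVec, dotProduct, Complex.im_sum] using h

lemma deriv_eigenvalue_eq_zero (hf : f ≠ 0) (hH : H.IsSymm)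
    (hg : DifferentiableAt ℝ g 0) (hg₀ : g 0 = fun u => (f u : ℂ)) (hl : DifferentiableAt ℝ l 0)
    (heig : ∀ᶠ t in 𝓝 0, phaseTwist H (t • B) *ᵥ g t = (l t : ℂ) • g t) :
    deriv l 0 = 0 := by
  have hherm : (phaseTwist H ((0 : ℝ) • B)).IsHermitian := by
    rw [zero_smul]
    exact phaseTwist_isHermitian hH (by simp)
  have h := congrArg Complex.re (star_dotProduct_deriv_mulVec
    (hasDerivAt_phaseTwist_smul H B 0) hg.hasDerivAt hl.hasDerivAt hherm heig)
  have hff : ∑ u, f u * f u ≠ 0 := dotProduct_self_eq_zero.not.mpr hf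
  simpa [hg₀, phaseTwist, mulVec, dotProduct, Complex.re_sum, hff] using h

lemma deriv_deriv_eigenvalue_mul_dotProduct_self (hf : f ≠ 0) (hH : H.IsSymm) (hB : Bᵀ = -B)
    (hg : ContDiffAt ℝ 2 g 0) (hg₀ : g 0 = fun u => (f u : ℂ)) (hl : ContDiffAt ℝ 2 l 0)
    (heig : ∀ᶠ t in 𝓝 0, phaseTwist H (t • B) *ᵥ g t = (l t : ℂ) • g t) :
    deriv (deriv l) 0 * ∑ u, f u * f u =
      ∑ u, (deriv g 0 u).im * ∑ v, B u v * H u v * f v +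
        ∑ u, f u * (-∑ v, B u v * (B u v * H u v) * f v +
          -∑ v, B u v * H u v * (deriv g 0 v).im) := by
  set K : ℝ → Matrix V V ℂ := fun t => of fun u v => Complex.I * B u v * phaseTwist H (t • B) u v
  have hK (t : ℝ) (u v : V) : HasDerivAt (fun s => phaseTwist H (s • B) u v) (K t u v) t :=
    hasDerivAt_phaseTwist_smul H B t u v
  have hK' (u v : V) : HasDerivAt (fun t => K t u v) (Complex.I * B u v * K 0 u v) 0 :=
    (hK 0 u v).const_mul (Complex.I * B u v)
  have hherm (t : ℝ) : (phaseTwist H (t • B)).IsHermitian :=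
    phaseTwist_isHermitian hH (by rw [transpose_smul, hB, smul_neg])
  have hrate : ∀ᶠ t in 𝓝 0, star (g t) ⬝ᵥ K t *ᵥ g t = deriv l t * (star (g t) ⬝ᵥ g t) := by
    filter_upwards [heig.eventually_nhds, hg.eventually (by simp), hl.eventually (by simp)]
      with t ht hgt hlt
    exact star_dotProduct_deriv_mulVec (hK t) (hgt.differentiableAt (by simp)).hasDerivAt
      (hlt.differentiableAt (by simp)).hasDerivAt (hherm t) ht
  have hg' : HasDerivAt g (deriv g 0) 0 := (hg.differentiableAt (by simp)).hasDerivAt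
  have hl_deriv : HasDerivAt (deriv l) (deriv (deriv l) 0) 0 :=
    ((hl.derivWithin (m := 1) (by norm_num)).differentiableAt (by simp)).hasDerivAt
  have hl' : deriv l 0 = 0 :=
    deriv_eigenvalue_eq_zero hf hH hg'.differentiableAt hg₀ (hl.differentiableAt (by simp)) heig
  have h := congrArg Complex.re <|
    (hasDerivAt_dotProduct hg'.star (hasDerivAt_mulVec hK' hg')).unique <|
      (hl_deriv.ofReal_comp.mul (hasDerivAt_dotProduct hg'.star hg')).congr_of_eventuallyEq hrate
  symm
  simpa [hl', hg₀, K, phaseTwist, mulVec, dotProduct] using h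

end SecondVariation

end PhaseTwist

section GroundStateForm

variable {V : Type*} {H B : Matrix V V ℝ} {f : V → ℝ} {l : ℝ}

/-- The differential `(dη) u v = η u - η v` of a function on the vertices. -/
def coboundary : (V → ℝ) →ₗ[ℝ] Matrix V V ℝ where
  toFun η := of fun u v => η u - η v
  map_add' η η' := by
    ext u v
    simp only [of_apply, Pi.add_apply, Matrix.add_apply]
    ring
  map_smul' c η := by
    ext u v
    simp only [of_apply, Pi.smul_apply, Matrix.smul_apply, smul_eq_mul, RingHom.id_apply]
    ring

@[simp]
lemma coboundary_apply (η : V → ℝ) (u v : V) : coboundary η u v = η u - η v := rfl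

lemma transpose_coboundary (η : V → ℝ) : (coboundary η)ᵀ = -coboundary η := by
  ext u v
  simp

variable [Fintype V]

/-- The symmetric bilinear form on functions of ordered pairs with weights `-H u v * f u * f v`.
On coboundaries it is the ground state representation (Jacobi substitution) of twice the
quadratic form of `H - l`, for `f` an eigenvector of `H` with eigenvalue `l`. -/
def groundStateForm (H : Matrix V V ℝ) (f : V → ℝ) (ω ω' : Matrix V V ℝ) : ℝ :=
  -∑ u, ∑ v, H u v * (f u * f v) * (ω u v * ω' u v)

lemma groundStateForm_comm (H : Matrix V V ℝ) (f : V → ℝ) (ω ω' : Matrix V V ℝ) :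
    groundStateForm H f ω ω' = groundStateForm H f ω' ω := by
  simp only [groundStateForm, mul_comm (ω _ _)]

lemma groundStateForm_add_right (H : Matrix V V ℝ) (f : V → ℝ) (ω ω₁ ω₂ : Matrix V V ℝ) :
    groundStateForm H f ω (ω₁ + ω₂) = groundStateForm H f ω ω₁ + groundStateForm H f ω ω₂ := by
  simp only [groundStateForm, Matrix.add_apply, mul_add, Finset.sum_add_distrib, neg_add]

lemma groundStateForm_sub_right (H : Matrix V V ℝ) (f : V → ℝ) (ω ω₁ ω₂ : Matrix V V ℝ) :
    groundStateForm H f ω (ω₁ - ω₂) = groundStateForm H f ω ω₁ - groundStateForm H f ω ω₂ := by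
  simp only [groundStateForm, Matrix.sub_apply, mul_sub, Finset.sum_sub_distrib]
  ring

/-- Summation by parts. -/
lemma groundStateForm_coboundary_left (hH : H.IsSymm) {ω : Matrix V V ℝ} (hω : ωᵀ = -ω)
    (f η : V → ℝ) :
    groundStateForm H f (coboundary η) ω =
      -2 * ∑ u, f u * η u * ∑ v, ω u v * H u v * f v := by
  have hω_uv (u v : V) : ω v u = -ω u v := congrFun (congrFun hω u) v
  have hswap : ∑ u, ∑ v, H u v * (f u * f v) * (η v * ω u v) =
      -∑ u, ∑ v, H u v * (f u * f v) * (η u * ω u v) := by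
    rw [Finset.sum_comm]
    simp only [← Finset.sum_neg_distrib]
    refine Finset.sum_congr rfl fun u _ => Finset.sum_congr rfl fun v _ => ?_
    rw [hω_uv, hH.apply]
    ring
  have hfactor : ∑ u, ∑ v, H u v * (f u * f v) * (η u * ω u v) =
      ∑ u, f u * η u * ∑ v, ω u v * H u v * f v := by
    simp only [Finset.mul_sum]
    exact Finset.sum_congr rfl fun u _ => Finset.sum_congr rfl fun v _ => by ring
  simp only [groundStateForm, coboundary_apply, sub_mul, mul_sub, Finset.sum_sub_distrib, hswap,
    hfactor]
  ring

lemma sum_coboundary_mul (heig : H *ᵥ f = l • f) (η : V → ℝ) (u : V) :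
    ∑ v, coboundary η u v * H u v * f v = l * (f * η) u - (H *ᵥ (f * η)) u := by
  have hu : ∑ v, H u v * f v = l * f u := congrFun heig u
  calc ∑ v, coboundary η u v * H u v * f v
      = η u * ∑ v, H u v * f v - ∑ v, H u v * (f v * η v) := by
        rw [Finset.mul_sum, ← Finset.sum_sub_distrib]
        exact Finset.sum_congr rfl fun v _ => by rw [coboundary_apply]; ring
    _ = l * (f * η) u - (H *ᵥ (f * η)) u := by
        rw [hu, Pi.mul_apply]
        simp only [mulVec, dotProduct, Pi.mul_apply]
        ring

theorem groundStateForm_coboundary_self (hH : H.IsSymm) (heig : H *ᵥ f = l • f) (η : V → ℝ) :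
    groundStateForm H f (coboundary η) (coboundary η) =
      2 * ((f * η) ⬝ᵥ H *ᵥ (f * η) - l * ((f * η) ⬝ᵥ (f * η))) := by
  rw [groundStateForm_coboundary_left hH (transpose_coboundary η)]
  simp only [sum_coboundary_mul heig, dotProduct, Finset.mul_sum, ← Finset.sum_sub_distrib]
  exact Finset.sum_congr rfl fun u _ => by rw [Pi.mul_apply]; ring

section SecondVariation

variable {g : ℝ → V → ℂ} {l : ℝ → ℝ} {θ : V → ℝ}

/-- The first order phase of the eigenvector is the potential of the Hodge projection of `B`. -/
lemma groundStateForm_coboundary_phase_sub (hH : H.IsSymm) (hB : Bᵀ = -B)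
    (hf : H *ᵥ f = l 0 • f) (hg : DifferentiableAt ℝ g 0) (hg₀ : g 0 = fun u => (f u : ℂ))
    (hl : DifferentiableAt ℝ l 0)
    (heig : ∀ᶠ t in 𝓝 0, phaseTwist H (t • B) *ᵥ g t = (l t : ℂ) • g t)
    (hθ : ∀ u, (deriv g 0 u).im = f u * θ u) (η : V → ℝ) :
    groundStateForm H f (coboundary η) (coboundary θ - B) = 0 := by
  have hcoclosed (u : V) : ∑ v, (coboundary θ - B) u v * H u v * f v = 0 := by
    have h := mulVec_im_deriv_eigenvector hg hg₀ hl heig u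
    have hθ_u := sum_coboundary_mul hf θ u
    simp only [hθ] at h
    simp only [mulVec, dotProduct, Pi.mul_apply] at hθ_u
    simp only [Matrix.sub_apply, sub_mul, Finset.sum_sub_distrib]
    linarith
  rw [groundStateForm_coboundary_left hH
    (by rw [transpose_sub, transpose_coboundary, hB, neg_sub_neg, neg_sub])]
  simp only [hcoclosed, mul_zero, Finset.sum_const_zero]

theorem deriv_deriv_eigenvalue_eq_groundStateForm (hf₀ : f ≠ 0) (hH : H.IsSymm) (hB : Bᵀ = -B)
    (hf : H *ᵥ f = l 0 • f) (hg : ContDiffAt ℝ 2 g 0) (hg₀ : g 0 = fun u => (f u : ℂ))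
    (hl : ContDiffAt ℝ 2 l 0)
    (heig : ∀ᶠ t in 𝓝 0, phaseTwist H (t • B) *ᵥ g t = (l t : ℂ) • g t)
    (hθ : ∀ u, (deriv g 0 u).im = f u * θ u) :
    deriv (deriv l) 0 * (f ⬝ᵥ f) =
      groundStateForm H f (coboundary θ - B) (coboundary θ - B) := by
  have hBB : ∑ u, f u * ∑ v, B u v * (B u v * H u v) * f v = -groundStateForm H f B B := by
    simp only [groundStateForm, neg_neg, Finset.mul_sum]
    exact Finset.sum_congr rfl fun u _ => Finset.sum_congr rfl fun v _ => by ring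
  have hswap : ∑ u, f u * ∑ v, B u v * H u v * (f v * θ v) =
      -∑ u, f u * θ u * ∑ v, B u v * H u v * f v := by
    simp only [Finset.mul_sum, ← Finset.sum_neg_distrib]
    rw [Finset.sum_comm]
    refine Finset.sum_congr rfl fun u _ => Finset.sum_congr rfl fun v _ => ?_
    rw [show B v u = -B u v from congrFun (congrFun hB u) v, hH.apply]
    ring
  have hrate := deriv_deriv_eigenvalue_mul_dotProduct_self hf₀ hH hB hg hg₀ hl heig
  simp only [hθ, mul_add, mul_neg, Finset.sum_add_distrib, Finset.sum_neg_distrib, hBB,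
    hswap] at hrate
  have horth := groundStateForm_coboundary_phase_sub hH hB hf (hg.differentiableAt (by simp)) hg₀
    (hl.differentiableAt (by simp)) heig hθ θ
  have hθB := groundStateForm_coboundary_left hH hB f θ
  rw [groundStateForm_sub_right, groundStateForm_comm H f _ (coboundary θ), horth,
    groundStateForm_comm, groundStateForm_sub_right, groundStateForm_comm H f B (coboundary θ)]
  rw [dotProduct, hrate]
  linarith

end SecondVariation

end GroundStateForm

section Hessian

variable {k : ℕ} {F : (Fin k → ℝ) → ℝ} {x : Fin k → ℝ}

lemma hessMat_apply (hF : ContDiffAt ℝ 2 F x) (i j : Fin k) :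
    hessMat F x i j = fderiv ℝ (fderiv ℝ F) x (Pi.single i 1) (Pi.single j 1) := by
  have hdiff : DifferentiableAt ℝ (fderiv ℝ F) x :=
    (hF.fderiv_right (m := 1) (by norm_num)).differentiableAt (by simp)
  rw [hessMat, of_apply, fderiv_clm_apply hdiff (differentiableAt_const _)]
  simp

lemma hessMat_isHermitian (hF : ContDiffAt ℝ 2 F x) : (hessMat F x).IsHermitian := by
  ext i j
  rw [conjTranspose_apply, star_trivial, hessMat_apply hF, hessMat_apply hF,
    (hF.isSymmSndFDerivAt (by simp)).eq]

lemma dotProduct_hessMat_mulVec (hF : ContDiffAt ℝ 2 F x) (a : Fin k → ℝ) :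
    a ⬝ᵥ hessMat F x *ᵥ a = fderiv ℝ (fderiv ℝ F) x a a := by
  conv_rhs => rw [pi_eq_sum_univ' a]
  simp only [map_sum, map_smul, _root_.sum_apply, _root_.smul_apply, smul_eq_mul, dotProduct,
    mulVec, hessMat_apply hF, Finset.mul_sum]
  rw [Finset.sum_comm]
  refine Finset.sum_congr rfl fun j _ => Finset.sum_congr rfl fun i _ => by ring_nf

lemma deriv_deriv_comp_add_smul (hF : ContDiffAt ℝ 2 F x) (a : Fin k → ℝ) :
    deriv (deriv fun t : ℝ => F (x + t • a)) 0 = a ⬝ᵥ hessMat F x *ᵥ a := by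
  have hline : Tendsto (fun t : ℝ => x + t • a) (𝓝 0) (𝓝 x) :=
    Continuous.tendsto' (by fun_prop) _ _ (by simp)
  have hfirst : deriv (fun t : ℝ => F (x + t • a)) =ᶠ[𝓝 0] fun t => fderiv ℝ F (x + t • a) a := by
    filter_upwards [hline.eventually (hF.eventually (by simp))] with t ht
    exact (ht.differentiableAt (by simp)).deriv_comp_add_smul
  have hdiff : DifferentiableAt ℝ (fderiv ℝ F) (x + (0 : ℝ) • a) := by
    rw [zero_smul, add_zero]
    exact (hF.fderiv_right (m := 1) (by norm_num)).differentiableAt (by simp)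
  rw [hfirst.deriv_eq, dotProduct_hessMat_mulVec hF,
    (hdiff.clm_apply (differentiableAt_const a)).deriv_comp_add_smul, zero_smul, add_zero,
    fderiv_clm_apply (by simpa using hdiff) (differentiableAt_const _)]
  simp

end Hessian

section MagneticFamily

variable {N β : ℕ} {H : Matrix (Fin N) (Fin N) ℝ} {f : Fin N → ℝ} {k : Fin N}
  {B : (Fin β → ℝ) →ₗ[ℝ] Matrix (Fin N) (Fin N) ℝ}

lemma contDiff_phaseTwist_apply (H : Matrix (Fin N) (Fin N) ℝ)
    (B : (Fin β → ℝ) →ₗ[ℝ] Matrix (Fin N) (Fin N) ℝ) (n : WithTop ℕ∞) (u v : Fin N) :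
    ContDiff ℝ n fun α => phaseTwist H (B α) u v := by
  have hB : ContDiff ℝ n fun α => (B α u v : ℂ) :=
    Complex.ofRealCLM.contDiff.comp
      (LinearMap.toContinuousLinearMap (Matrix.entryLinearMap ℝ ℝ u v ∘ₗ B)).contDiff
  exact contDiff_const.mul (contDiff_const.mul hB).cexp

lemma sortedEigs_phaseTwist_zero (hH : H.IsSymm) :
    sortedEigs (phaseTwist H 0) = sortedEigs H := by
  rw [phaseTwist_zero]
  exact sortedEigs_map_ofReal (by rwa [IsHermitian, conjTranspose_eq_transpose_of_trivial])

theorem exists_contDiffAt_magnetic_eigenpair (hH : H.IsSymm) (hB : ∀ α, (B α)ᵀ = -B α)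
    (hsimple : Module.finrank ℝ (Module.End.eigenspace (toLin' H) (sortedEigs H k)) = 1)
    (hf : f ≠ 0) (heig : H *ᵥ f = sortedEigs H k • f) :
    ∃ g : (Fin β → ℝ) → Fin N → ℂ, ContDiffAt ℝ 2 g 0 ∧ g 0 = (fun u => (f u : ℂ)) ∧
      ContDiffAt ℝ 2 (fun α => sortedEigs (phaseTwist H (B α)) k) 0 ∧
      ∀ᶠ α in 𝓝 0, phaseTwist H (B α) *ᵥ g α = (sortedEigs (phaseTwist H (B α)) k : ℂ) • g α := by
  have hH' : H.IsHermitian := by rwa [IsHermitian, conjTranspose_eq_transpose_of_trivial]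
  refine exists_contDiffAt_eigenpair two_ne_zero (fun α => phaseTwist_isHermitian hH (hB α))
    (fun u v => (contDiff_phaseTwist_apply H B 2 u v).contDiffAt) (fun i hi => ?_)
    (f := fun u => (f u : ℂ)) (fun h => hf ?_) ?_
  · rw [map_zero, sortedEigs_phaseTwist_zero hH] at hi
    exact eq_of_sortedEigs_eq_of_finrank_eigenspace_le_one hH' hsimple.le hi
  · ext u
    simpa using congrFun h u
  · ext u
    rw [map_zero, sortedEigs_phaseTwist_zero hH, phaseTwist_zero]
    simpa [mulVec, dotProduct] using congrArg ((↑) : ℝ → ℂ) (congrFun heig u)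

variable {g : (Fin β → ℝ) → Fin N → ℂ} {L : (Fin β → ℝ) → ℝ}

lemma eventually_eigenEquation_smul
    (hev : ∀ᶠ α in 𝓝 0, phaseTwist H (B α) *ᵥ g α = (L α : ℂ) • g α) (a : Fin β → ℝ) :
    ∀ᶠ t : ℝ in 𝓝 0, phaseTwist H (t • B a) *ᵥ g (t • a) = (L (t • a) : ℂ) • g (t • a) := by
  have hline : Tendsto (fun t : ℝ => t • a) (𝓝 0) (𝓝 0) :=
    Continuous.tendsto' (by fun_prop) _ _ (by simp)
  filter_upwards [hline.eventually hev] with t ht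
  rwa [← map_smul]

theorem fderiv_eigenvalue_eq_zero (hH : H.IsSymm) (hf : f ≠ 0) (hg : DifferentiableAt ℝ g 0)
    (hg₀ : g 0 = fun u => (f u : ℂ)) (hL : DifferentiableAt ℝ L 0)
    (hev : ∀ᶠ α in 𝓝 0, phaseTwist H (B α) *ᵥ g α = (L α : ℂ) • g α) :
    fderiv ℝ L 0 = 0 := by
  ext1 a
  have hline : DifferentiableAt ℝ (fun t : ℝ => t • a) 0 := by fun_prop
  have hderiv : deriv (fun t : ℝ => L (t • a)) 0 = 0 := deriv_eigenvalue_eq_zero hf hH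
    (DifferentiableAt.comp 0 (by simpa using hg) hline) (by simpa using hg₀)
    (DifferentiableAt.comp 0 (by simpa using hL) hline)
    (eventually_eigenEquation_smul hev a)
  have hcomp := DifferentiableAt.deriv_comp_add_smul (x := 0) (t := (0 : ℝ)) (y := a)
    (by simpa using hL)
  simp only [zero_add, zero_smul] at hcomp
  rw [← hcomp, hderiv, _root_.zero_apply]

theorem groundStateForm_eq_hessMat (hH : H.IsSymm) (hB : ∀ α, (B α)ᵀ = -B α) (hf₀ : f ≠ 0)
    (hf : H *ᵥ f = L 0 • f) (hg : ContDiffAt ℝ 2 g 0) (hg₀ : g 0 = fun u => (f u : ℂ))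
    (hL : ContDiffAt ℝ 2 L 0)
    (hev : ∀ᶠ α in 𝓝 0, phaseTwist H (B α) *ᵥ g α = (L α : ℂ) • g α)
    {a : Fin β → ℝ} {θ : Fin N → ℝ} (hθ : ∀ u, (fderiv ℝ g 0 a u).im = f u * θ u)
    (η : Fin N → ℝ) :
    groundStateForm H f (coboundary η + (coboundary θ - B a))
        (coboundary η + (coboundary θ - B a)) =
      2 * ((f * η) ⬝ᵥ H *ᵥ (f * η) - L 0 * ((f * η) ⬝ᵥ (f * η))) +
        (f ⬝ᵥ f) * (a ⬝ᵥ hessMat L 0 *ᵥ a) := by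
  have hline : ContDiffAt ℝ 2 (fun t : ℝ => t • a) 0 := by fun_prop
  have hga : ContDiffAt ℝ 2 (fun t : ℝ => g (t • a)) 0 :=
    ContDiffAt.comp 0 (by simpa using hg) hline
  have hLa : ContDiffAt ℝ 2 (fun t : ℝ => L (t • a)) 0 :=
    ContDiffAt.comp 0 (by simpa using hL) hline
  have hg' : deriv (fun t : ℝ => g (t • a)) 0 = fderiv ℝ g 0 a := by
    have hg_diff : DifferentiableAt ℝ g (0 + (0 : ℝ) • a) := by
      rw [zero_smul, add_zero]
      exact hg.differentiableAt (by simp)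
    simpa only [zero_add, zero_smul] using hg_diff.deriv_comp_add_smul
  have hL'' := deriv_deriv_comp_add_smul hL a
  simp only [zero_add] at hL''
  have hev_a := eventually_eigenEquation_smul hev a
  have horth := groundStateForm_coboundary_phase_sub hH (hB a) (by simpa using hf)
    (hga.differentiableAt (by simp)) (by simpa using hg₀) (hLa.differentiableAt (by simp)) hev_a
    (by simpa only [hg'] using hθ) η
  have hsecond := deriv_deriv_eigenvalue_eq_groundStateForm hf₀ hH (hB a) (by simpa using hf) hga
    (by simpa using hg₀) hLa hev_a (by simpa only [hg'] using hθ)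
  rw [groundStateForm_add_right, groundStateForm_comm, groundStateForm_comm H f _ (_ - _),
    groundStateForm_add_right, groundStateForm_add_right, groundStateForm_comm H f (_ - _),
    horth, ← hsecond, groundStateForm_coboundary_self hH hf, hL'']
  ring

theorem exists_phase_groundStateForm_eq (hH : H.IsSymm) (hB : ∀ α, (B α)ᵀ = -B α)
    (hsimple : Module.finrank ℝ (Module.End.eigenspace (toLin' H) (sortedEigs H k)) = 1)
    (hf : ∀ v, f v ≠ 0) (heig : H *ᵥ f = sortedEigs H k • f)
    (hL : L = fun α => sortedEigs (phaseTwist H (B α)) k) :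
    fderiv ℝ L 0 = 0 ∧ (hessMat L 0).IsHermitian ∧ ∃ θ : (Fin β → ℝ) →ₗ[ℝ] Fin N → ℝ, ∀ a η,
      groundStateForm H f (coboundary η + (coboundary (θ a) - B a))
          (coboundary η + (coboundary (θ a) - B a)) =
        2 * ((f * η) ⬝ᵥ H *ᵥ (f * η) - sortedEigs H k * ((f * η) ⬝ᵥ (f * η))) +
          (f ⬝ᵥ f) * (a ⬝ᵥ hessMat L 0 *ᵥ a) := by
  have hf₀ : f ≠ 0 := fun h => hf k (congrFun h k)
  have hL₀ : L 0 = sortedEigs H k := by simp only [hL, map_zero, sortedEigs_phaseTwist_zero hH]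
  obtain ⟨g, hg, hg₀, hL_smooth, hev⟩ := exists_contDiffAt_magnetic_eigenpair hH hB hsimple hf₀ heig
  rw [← hL] at hL_smooth
  have hev : ∀ᶠ α in 𝓝 0, phaseTwist H (B α) *ᵥ g α = (L α : ℂ) • g α := by rwa [hL]
  let θ : (Fin β → ℝ) →ₗ[ℝ] Fin N → ℝ := LinearMap.pi fun u => (f u)⁻¹ •
    (Complex.imLm ∘ₗ LinearMap.proj u ∘ₗ (fderiv ℝ g 0 : (Fin β → ℝ) →ₗ[ℝ] Fin N → ℂ))
  have hθ (a : Fin β → ℝ) (u : Fin N) : (fderiv ℝ g 0 a u).im = f u * θ a u :=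
    (mul_inv_cancel_left₀ (hf u) _).symm
  refine ⟨fderiv_eigenvalue_eq_zero hH hf₀ (hg.differentiableAt (by simp)) hg₀
    (hL_smooth.differentiableAt (by simp)) hev, hessMat_isHermitian hL_smooth, θ, fun a η => ?_⟩
  rw [← hL₀] at heig ⊢
  exact groundStateForm_eq_hessMat hH hB hf₀ heig hg hg₀ hL_smooth hev (hθ a) η

end MagneticFamily

section Signature

open QuadraticMap QuadraticForm

variable {𝕜 M M' : Type*} [Field 𝕜] [LinearOrder 𝕜] [AddCommGroup M] [Module 𝕜 M]
  [AddCommGroup M'] [Module 𝕜 M']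

lemma sigNeg_comp_le [FiniteDimensional 𝕜 M] [FiniteDimensional 𝕜 M'] (Q : QuadraticForm 𝕜 M')
    (T : M →ₗ[𝕜] M') : sigNeg (Q.comp T) ≤ sigNeg Q := by
  obtain ⟨W, hW, hneg⟩ := exists_finrank_eq_sigNeg_and_negDef (Q.comp T)
  have hinj : Function.Injective (T.domRestrict W) := by
    refine (injective_iff_map_eq_zero _).mpr fun x hx => ?_
    by_contra hx₀
    have hlt := hneg x hx₀
    rw [LinearMap.domRestrict_apply] at hx
    simp [hx] at hlt
  have hneg_map : ((-Q).restrict (LinearMap.range (T.domRestrict W))).PosDef := by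
    rintro ⟨_, x, rfl⟩ hx
    exact hneg x fun h => hx (by simp [h])
  rw [← hW, ← LinearMap.finrank_range_of_inj hinj]
  exact le_sigNeg_of_negDef Q hneg_map

lemma sigNeg_comp_of_surjective [FiniteDimensional 𝕜 M] [FiniteDimensional 𝕜 M']
    (Q : QuadraticForm 𝕜 M') {T : M →ₗ[𝕜] M'} (hT : Function.Surjective T) :
    sigNeg (Q.comp T) = sigNeg Q := by
  obtain ⟨S, hS⟩ := T.exists_rightInverse_of_surjective (LinearMap.range_eq_top.mpr hT)
  refine (sigNeg_comp_le Q T).antisymm ?_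
  have hQ : Q = (Q.comp T).comp S := by
    ext x
    exact congrArg Q (DFunLike.congr_fun hS x).symm
  exact (congrArg sigNeg hQ).trans_le (sigNeg_comp_le (Q.comp T) S)

variable [IsStrictOrderedRing 𝕜]

lemma sigNeg_smul [FiniteDimensional 𝕜 M] (Q : QuadraticForm 𝕜 M) {c : 𝕜} (hc : 0 < c) :
    sigNeg (c • Q) = sigNeg Q := by
  have hset : {r | ∃ W : Submodule 𝕜 M, Module.finrank 𝕜 W = r ∧ ((-(c • Q)).restrict W).PosDef} =
      {r | ∃ W : Submodule 𝕜 M, Module.finrank 𝕜 W = r ∧ ((-Q).restrict W).PosDef} := by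
    simp [QuadraticMap.PosDef, mul_neg_iff, hc, hc.not_gt]
  exact (sigNeg_isGreatest (c • Q)).unique (hset ▸ sigNeg_isGreatest Q)

lemma sigNeg_prod [FiniteDimensional 𝕜 M] [FiniteDimensional 𝕜 M'] (Q : QuadraticForm 𝕜 M)
    (Q' : QuadraticForm 𝕜 M') : sigNeg (Q.prod Q') = sigNeg Q + sigNeg Q' := by
  have : Invertible (2 : 𝕜) := invertibleOfNonzero two_ne_zero
  obtain ⟨w, ⟨e⟩⟩ := Q.equivalent_weightedSumSquares
  obtain ⟨w', ⟨e'⟩⟩ := Q'.equivalent_weightedSumSquares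
  have hprod : (Q.prod Q').Equivalent (weightedSumSquares 𝕜 (Sum.elim w w')) :=
    ⟨(e.prod e').trans ⟨(LinearEquiv.sumArrowLequivProdArrow _ _ 𝕜 𝕜).symm, fun x => by
      simp [LinearEquiv.sumArrowLequivProdArrow, Equiv.sumArrowEquivProdArrow]⟩⟩
  rw [sigNeg_of_equiv_weightedSumSquares hprod, sigNeg_of_equiv_weightedSumSquares ⟨e⟩,
    sigNeg_of_equiv_weightedSumSquares ⟨e'⟩]
  have hunion : {i | Sum.elim w w' i < 0} =
      Sum.inl '' {i | w i < 0} ∪ Sum.inr '' {i | w' i < 0} := by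
    ext (i | i) <;> simp
  rw [hunion, Set.ncard_union_eq (by simp [Set.disjoint_left]),
    Set.ncard_image_of_injective _ Sum.inl_injective,
    Set.ncard_image_of_injective _ Sum.inr_injective]

end Signature

section SpectralSignature

open QuadraticMap QuadraticForm

variable {d : ℕ} {M : Matrix (Fin d) (Fin d) ℝ}

lemma toQuadraticForm'_apply {R ι : Type*} [CommRing R] [Fintype ι] [DecidableEq ι]
    (M : Matrix ι ι R) (x : ι → R) : M.toQuadraticForm' x = x ⬝ᵥ M *ᵥ x := by
  rw [toQuadraticForm', LinearMap.BilinMap.toQuadraticMap_apply, toLinearMap₂'_apply']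

lemma sigNeg_toQuadraticForm'_sub_smul_one (hM : M.IsHermitian) (c : ℝ) :
    sigNeg (M - c • 1).toQuadraticForm' = {i | sortedEigs M i < c}.ncard := by
  obtain ⟨U, hU, hdiag⟩ := exists_unitary_diagonalization hM
  have hcomp : (M - c • 1).toQuadraticForm' =
      (weightedSumSquares ℝ fun i => sortedEigs M i - c).comp (toLin' U) := by
    ext x
    have hquad := star_dotProduct_mulVec_unitary_diagonalization hdiag x
    have hnorm := sum_norm_sq_unitary_mulVec hU x
    rw [QuadraticMap.comp_apply, weightedSumSquares_apply, toQuadraticForm'_apply, sub_mulVec,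
      smul_mulVec, one_mulVec, dotProduct_sub, dotProduct_smul]
    simp only [star_trivial, Real.norm_eq_abs, sq_abs, RCLike.ofReal_real_eq_id, id] at hquad hnorm
    rw [hquad, dotProduct]
    simp only [toLin'_apply, smul_eq_mul, ← pow_two, ← hnorm, sub_mul, Finset.sum_sub_distrib,
      Finset.mul_sum]
  have hsurj : Function.Surjective (toLin' U) :=
    LinearMap.injective_iff_surjective.mp (unitary_mulVec_injective hU)
  rw [hcomp, sigNeg_comp_of_surjective _ hsurj, sigNeg_weightedSumSquares]
  simp only [sub_neg]

lemma sigNeg_toQuadraticForm' (hM : M.IsHermitian) : sigNeg M.toQuadraticForm' = negEigCount M := by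
  simpa [negEigCount] using sigNeg_toQuadraticForm'_sub_smul_one hM 0

lemma ncard_sortedEigs_lt (hM : M.IsHermitian) {k : Fin d}
    (hsimple : Module.finrank ℝ (Module.End.eigenspace (toLin' M) (sortedEigs M k)) ≤ 1) :
    {i | sortedEigs M i < sortedEigs M k}.ncard = k := by
  have hset : {i | sortedEigs M i < sortedEigs M k} = Finset.Iio k := by
    ext i
    rw [Finset.coe_Iio, Set.mem_Iio, Set.mem_ofPred_eq]
    refine ⟨fun h => (sortedEigs_monotone M).reflect_lt h, fun h => ?_⟩
    exact ((sortedEigs_monotone M) h.le).lt_of_ne fun heq =>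
      h.ne (eq_of_sortedEigs_eq_of_finrank_eigenspace_le_one hM hsimple heq)
  rw [hset, Set.ncard_coe_finset, Fin.card_Iio]

end SpectralSignature

section EdgePotential

variable {V ι : Type*} [DecidableEq V] [Fintype ι] {uE vE : ι → V}

/-- The antisymmetric magnetic potential carrying the flux `α j` on the oriented edge
`(uE j, vE j)`. -/
def edgePotential (uE vE : ι → V) : (ι → ℝ) →ₗ[ℝ] Matrix V V ℝ :=
  ∑ j, (LinearMap.proj j).smulRight (single (uE j) (vE j) 1 - single (vE j) (uE j) 1)

lemma edgePotential_eq_sum (uE vE : ι → V) (α : ι → ℝ) :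
    edgePotential uE vE α = ∑ j, α j • (single (uE j) (vE j) 1 - single (vE j) (uE j) 1) := by
  simp [edgePotential]

lemma transpose_edgePotential (uE vE : ι → V) (α : ι → ℝ) :
    (edgePotential uE vE α)ᵀ = -edgePotential uE vE α := by
  simp [edgePotential_eq_sum, transpose_sum, ← Finset.sum_neg_distrib, ← smul_neg]

lemma edgePotential_apply_of_forall_ne {u v : V} (h : ∀ j, s(u, v) ≠ s(uE j, vE j)) (α : ι → ℝ) :
    edgePotential uE vE α u v = 0 := by
  rw [edgePotential_eq_sum, Matrix.sum_apply]
  refine Finset.sum_eq_zero fun j _ => ?_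
  have hj := h j
  rw [Ne, Sym2.eq_iff, not_or] at hj
  rw [Matrix.smul_apply, Matrix.sub_apply, single_apply_of_ne, single_apply_of_ne, sub_zero,
    smul_zero] <;> grind

lemma edgePotential_apply_edge (hne : ∀ j, uE j ≠ vE j)
    (hinj : Function.Injective fun j => s(uE j, vE j)) (α : ι → ℝ) (j : ι) :
    edgePotential uE vE α (uE j) (vE j) = α j := by
  rw [edgePotential_eq_sum, Matrix.sum_apply, Finset.sum_eq_single j]
  · rw [Matrix.smul_apply, Matrix.sub_apply, single_apply_same, single_apply_of_ne, sub_zero,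
      smul_eq_mul, mul_one]
    exact fun h => hne j h.2
  · intro i _ hij
    have hs := hinj.ne hij
    rw [Ne, Sym2.eq_iff, not_or] at hs
    rw [Matrix.smul_apply, Matrix.sub_apply, single_apply_of_ne, single_apply_of_ne, sub_zero,
      smul_zero] <;> grind
  · simp

lemma schrodMag_eq_phaseTwist {N β : ℕ} (G : SimpleGraph (Fin N)) [DecidableRel G.Adj]
    (q : Fin N → ℝ) {uE vE : Fin β → Fin N} (hadj : ∀ j, G.Adj (uE j) (vE j))
    (hinj : Function.Injective fun j => s(uE j, vE j)) (α : Fin β → ℝ) :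
    schrodMag G q uE vE α = phaseTwist (schrodOp G q) (edgePotential uE vE α) := by
  ext u v
  by_cases h : ∃ j, s(u, v) = s(uE j, vE j)
  · obtain ⟨j, hj⟩ := h
    have hB := edgePotential_apply_edge (fun j => (hadj j).ne) hinj α j
    have hBt : edgePotential uE vE α (vE j) (uE j) = -α j := by
      rw [← hB]
      exact congrFun (congrFun (transpose_edgePotential uE vE α) (uE j)) (vE j)
    rw [schrodMag, Matrix.add_apply, Matrix.sum_apply, Finset.sum_eq_single j]
    · rcases Sym2.eq_iff.mp hj with ⟨rfl, rfl⟩ | ⟨rfl, rfl⟩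
      · simp [phaseTwist, hB, schrodOp, (hadj j).ne, hadj j, sub_eq_add_neg]
      · simp [phaseTwist, hBt, schrodOp, (hadj j).ne, (hadj j).ne', (hadj j).symm,
          sub_eq_add_neg]
    · intro i _ hij
      have hs := hinj.ne hij
      simp only [← hj, Ne, Sym2.eq_iff, not_or] at hs
      rw [of_apply, if_neg, if_neg] <;> grind
    · simp
  · push Not at h
    rw [schrodMag, Matrix.add_apply, Matrix.sum_apply, Finset.sum_eq_zero]
    · simp [phaseTwist, edgePotential_apply_of_forall_ne h]
    · intro j _
      have hs := h j
      rw [Ne, Sym2.eq_iff, not_or] at hs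
      rw [of_apply, if_neg, if_neg] <;> grind

end EdgePotential

section EdgeSum

variable {V : Type*} [Fintype V]

lemma sum_sum_sym2_eq_two_mul_sum (F : Sym2 V → ℝ) (hF : ∀ v, F s(v, v) = 0) :
    ∑ u, ∑ v, F s(u, v) = 2 * ∑ e, F e := by
  classical
  rw [← Fintype.sum_prod_type' (f := fun u v => F s(u, v)),
    ← Finset.sum_fiberwise (g := fun p : V × V => s(p.1, p.2)), Finset.mul_sum]
  refine Finset.sum_congr rfl fun e _ => ?_
  induction e with | _ a b => ?_
  rw [Finset.sum_congr rfl fun p hp => congrArg F (Finset.mem_filter.mp hp).2]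
  rcases eq_or_ne a b with rfl | hab
  · simp [hF]
  · have hfiber : Finset.univ.filter (fun p : V × V => s(p.1, p.2) = s(a, b)) =
        {(a, b), (b, a)} := by
      ext p
      simp [Prod.ext_iff]
    have hne : (a, b) ≠ (b, a) := fun h => hab (Prod.ext_iff.mp h).1
    rw [hfiber, Finset.sum_pair hne, two_mul]

end EdgeSum

section EdgeForms

variable {V : Type*} {G : SimpleGraph V}

/-- Evaluation of a function of ordered pairs on the edges of `G`, each edge being oriented by
the arbitrary choice `Quot.out`. -/
noncomputable def edgeRestrict (G : SimpleGraph V) : Matrix V V ℝ →ₗ[ℝ] G.edgeSet → ℝ :=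
  LinearMap.pi fun e => entryLinearMap ℝ ℝ (e : Sym2 V).out.1 (e : Sym2 V).out.2

@[simp]
lemma edgeRestrict_apply (G : SimpleGraph V) (ω : Matrix V V ℝ) (e : G.edgeSet) :
    edgeRestrict G ω e = ω (e : Sym2 V).out.1 (e : Sym2 V).out.2 := rfl

lemma apply_out_sym2_mk {X : V → V → ℝ} (hX : ∀ u v, X u v = X v u) (u v : V) :
    X s(u, v).out.1 s(u, v).out.2 = X u v := by
  have h : s(s(u, v).out.1, s(u, v).out.2) = s(u, v) := Quot.out_eq s(u, v)
  rcases Sym2.eq_iff.mp h with ⟨h₁, h₂⟩ | ⟨h₁, h₂⟩ <;> rw [h₁, h₂]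
  exact hX v u

lemma eq_zero_of_edgeRestrict_eq_zero {ω : Matrix V V ℝ} (hω : ωᵀ = -ω)
    (h : edgeRestrict G ω = 0) {u v : V} (huv : G.Adj u v) : ω u v = 0 := by
  have hω_uv (u v : V) : ω v u = -ω u v := congrFun (congrFun hω u) v
  have hsq := apply_out_sym2_mk (X := fun u v => ω u v ^ 2) (fun u v => by rw [hω_uv, neg_sq]) u v
  have he : ω s(u, v).out.1 s(u, v).out.2 = 0 := congrFun h ⟨s(u, v), huv⟩
  rwa [he, zero_pow two_ne_zero, eq_comm, pow_eq_zero_iff two_ne_zero] at hsq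

lemma eq_of_connected_of_forall_adj {α : Type*} {η : V → α} (hG : G.Connected)
    (h : ∀ ⦃u v⦄, G.Adj u v → η u = η v) (u v : V) : η u = η v := by
  obtain ⟨p⟩ := hG.preconnected u v
  induction p with
  | nil => rfl
  | cons huv _ ih => exact (h huv).trans ih

section Surjectivity

variable {ι : Type*} [Fintype ι] [DecidableEq V] {uE vE : ι → V}

lemma constant_and_eq_zero_of_edgeRestrict_eq_zero (hadj : ∀ j, G.Adj (uE j) (vE j))
    (hinj : Function.Injective fun j => s(uE j, vE j))
    (hconn : (G.deleteEdges {e | ∃ j, e = s(uE j, vE j)}).Connected) {η : V → ℝ} {a : ι → ℝ}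
    (h : edgeRestrict G (coboundary η + edgePotential uE vE a) = 0) :
    (∀ u v, η u = η v) ∧ a = 0 := by
  have hanti : (coboundary η + edgePotential uE vE a)ᵀ =
      -(coboundary η + edgePotential uE vE a) := by
    rw [transpose_add, transpose_coboundary, transpose_edgePotential, neg_add]
  have hzero {u v : V} (huv : G.Adj u v) : η u - η v + edgePotential uE vE a u v = 0 :=
    eq_zero_of_edgeRestrict_eq_zero hanti h huv
  have hconst : ∀ u v, η u = η v := eq_of_connected_of_forall_adj hconn fun u v huv => by
    rw [SimpleGraph.deleteEdges_adj, Set.mem_ofPred_eq, not_exists] at huv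
    have huv₀ := hzero huv.1
    rwa [edgePotential_apply_of_forall_ne huv.2, add_zero, sub_eq_zero] at huv₀
  refine ⟨hconst, funext fun j => ?_⟩
  have hj := hzero (hadj j)
  rwa [hconst (uE j) (vE j), sub_self, zero_add,
    edgePotential_apply_edge (fun j => (hadj j).ne) hinj] at hj

/-- The kernel consists of the constants, so this is a dimension count. -/
theorem exists_edgeRestrict_coboundary_add_eq [Fintype V] [DecidableRel G.Adj]
    (hadj : ∀ j, G.Adj (uE j) (vE j)) (hinj : Function.Injective fun j => s(uE j, vE j))
    (hconn : (G.deleteEdges {e | ∃ j, e = s(uE j, vE j)}).Connected)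
    (hcard : Fintype.card ι + Fintype.card V = G.edgeFinset.card + 1) (c : G.edgeSet → ℝ) :
    ∃ η a, edgeRestrict G (coboundary η + edgePotential uE vE a) = c := by
  let T : (V → ℝ) × (ι → ℝ) →ₗ[ℝ] G.edgeSet → ℝ :=
    edgeRestrict G ∘ₗ coboundary.coprod (edgePotential uE vE)
  have hker : Module.finrank ℝ (LinearMap.ker T) ≤ 1 := by
    have : Nonempty V := hconn.nonempty
    have hspan : LinearMap.ker T ≤ Submodule.span ℝ {(1, 0)} := by
      rintro ⟨η, a⟩ h
      obtain ⟨hη, rfl⟩ := constant_and_eq_zero_of_edgeRestrict_eq_zero hadj hinj hconn h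
      refine Submodule.mem_span_singleton.mpr ⟨η (Classical.arbitrary V), ?_⟩
      ext u
      · simpa using hη _ u
      · simp
    exact (Submodule.finrank_mono hspan).trans (finrank_span_singleton (by simp)).le
  have hrank := T.finrank_range_add_finrank_ker
  rw [Module.finrank_prod, Module.finrank_fintype_fun_eq_card,
    Module.finrank_fintype_fun_eq_card] at hrank
  have hsurj : LinearMap.range T = ⊤ := by
    refine Submodule.eq_top_of_finrank_eq (le_antisymm (Submodule.finrank_le _) ?_)
    rw [Module.finrank_fintype_fun_eq_card, ← SimpleGraph.edgeFinset_card]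
    omega
  obtain ⟨⟨η, a⟩, h⟩ := LinearMap.range_eq_top.mp hsurj c
  exact ⟨η, a, h⟩

end Surjectivity

variable [Fintype V] [DecidableRel G.Adj]

lemma sum_sum_eq_two_mul_sum_edgeSet {X : V → V → ℝ} (hX : ∀ u v, X u v = X v u)
    (hsupp : ∀ u v, ¬G.Adj u v → X u v = 0) :
    ∑ u, ∑ v, X u v = 2 * ∑ e : G.edgeSet, X (e : Sym2 V).out.1 (e : Sym2 V).out.2 := by
  set F : Sym2 V → ℝ := fun e => X e.out.1 e.out.2
  have hF (u v : V) : F s(u, v) = X u v := apply_out_sym2_mk hX u v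
  have hF_supp (e : Sym2 V) (he : e ∉ G.edgeFinset) : F e = 0 := by
    induction e with | _ u v => ?_
    rw [hF, hsupp u v (by simpa using he)]
  calc ∑ u, ∑ v, X u v = ∑ u, ∑ v, F s(u, v) := by simp only [hF]
    _ = 2 * ∑ e, F e :=
        sum_sum_sym2_eq_two_mul_sum F fun v => by rw [hF, hsupp v v (G.irrefl (v := v))]
    _ = 2 * ∑ e ∈ G.edgeFinset, F e := by
        rw [Finset.sum_subset (Finset.subset_univ _) fun e _ he => hF_supp e he]
    _ = 2 * ∑ e : G.edgeSet, F e := by rw [SimpleGraph.edgeFinset, Finset.sum_set_coe]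

theorem groundStateForm_self_eq_weightedSumSquares {H : Matrix V V ℝ} (hH : H.IsSymm)
    (hsupp : ∀ u v, u ≠ v → ¬G.Adj u v → H u v = 0) (f : V → ℝ) {ω : Matrix V V ℝ}
    (hω : ωᵀ = -ω) :
    groundStateForm H f ω ω = 2 * QuadraticMap.weightedSumSquares ℝ
      (edgeRestrict G (of fun u v => -(H u v * (f u * f v)))) (edgeRestrict G ω) := by
  have hω_uv (u v : V) : ω v u = -ω u v := congrFun (congrFun hω u) v
  have hsum := sum_sum_eq_two_mul_sum_edgeSet (G := G)
    (X := fun u v => -(H u v * (f u * f v)) * (ω u v * ω u v))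
    (fun u v => by rw [hω_uv, hH.apply]; ring) fun u v huv => by
      rcases eq_or_ne u v with rfl | hne
      · rw [self_eq_neg.mp (hω_uv u u), mul_zero, mul_zero]
      · rw [hsupp u v hne huv, zero_mul, neg_zero, zero_mul]
  simpa only [groundStateForm, QuadraticMap.weightedSumSquares_apply, edgeRestrict_apply, of_apply,
    smul_eq_mul, neg_mul, Finset.sum_neg_distrib] using hsum

end EdgeForms

section NodalCount

open QuadraticMap QuadraticForm

variable {V ι : Type*} {G : SimpleGraph V} {H : Matrix V V ℝ} {f : V → ℝ}

lemma ncard_edgeRestrict_neg (hH : H.IsSymm) (f : V → ℝ) :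
    {e : G.edgeSet | edgeRestrict G (of fun u v => -(H u v * (f u * f v))) e < 0}.ncard =
      {e | e ∈ G.edgeSet ∧ ∀ u v, e = s(u, v) → 0 < H u v * (f u * f v)}.ncard := by
  rw [← Set.ncard_image_of_injective _ Subtype.val_injective]
  congr 1
  ext e
  induction e with | _ a b => ?_
  have hout := apply_out_sym2_mk (X := fun u v => H u v * (f u * f v))
    (fun u v => by rw [hH.apply, mul_comm (f u)])
  simp only [Set.mem_image, Set.mem_ofPred_eq, edgeRestrict_apply, of_apply, neg_lt_zero,
    Subtype.exists, exists_and_right, exists_eq_right]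
  refine ⟨fun ⟨he, h⟩ => ⟨he, ?_⟩, fun ⟨he, h⟩ => ⟨he, ?_⟩⟩
  · rintro u v huv
    rw [huv, hout] at h
    exact h
  · rw [hout]
    exact h a b rfl

variable [Fintype V] [DecidableEq V] [Fintype ι] [DecidableRel G.Adj] {uE vE : ι → V}

theorem exists_surjective_apply_eq_edgeRestrict (hadj : ∀ j, G.Adj (uE j) (vE j))
    (hinj : Function.Injective fun j => s(uE j, vE j))
    (hconn : (G.deleteEdges {e | ∃ j, e = s(uE j, vE j)}).Connected)
    (hcard : Fintype.card ι + Fintype.card V = G.edgeFinset.card + 1) (hf : ∀ v, f v ≠ 0)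
    (θ : (ι → ℝ) →ₗ[ℝ] V → ℝ) :
    ∃ T : (V → ℝ) × (ι → ℝ) →ₗ[ℝ] G.edgeSet → ℝ, Function.Surjective T ∧ ∀ η a,
      T (f * η, a) =
        edgeRestrict G (coboundary η + (coboundary (θ a) - edgePotential uE vE a)) := by
  let D : (V → ℝ) →ₗ[ℝ] V → ℝ := LinearMap.mulLeft ℝ f⁻¹
  have hD (η : V → ℝ) : D (f * η) = η := funext fun u => inv_mul_cancel_left₀ (hf u) (η u)
  let T := edgeRestrict G ∘ₗ (coboundary ∘ₗ D).coprod (coboundary ∘ₗ θ - edgePotential uE vE)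
  have hT (η a) : T (f * η, a) =
      edgeRestrict G (coboundary η + (coboundary (θ a) - edgePotential uE vE a)) := by
    simp only [T, LinearMap.comp_apply, LinearMap.coprod_apply, LinearMap.sub_apply, hD]
  refine ⟨T, fun c => ?_, hT⟩
  obtain ⟨η, a, rfl⟩ := exists_edgeRestrict_coboundary_add_eq hadj hinj hconn hcard c
  refine ⟨(f * (η + θ a), -a), (hT _ _).trans (congrArg (edgeRestrict G) ?_)⟩
  simp only [map_add, map_neg]
  abel

/-- Sylvester's law of inertia: after a surjective linear substitution, the weighted sum of squares
on the edges splits as the direct sum of `H - l` and a positive multiple of `A`. -/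
theorem sigNeg_weightedSumSquares_eq_add [DecidableEq ι] (hH : H.IsSymm)
    (hsupp : ∀ u v, u ≠ v → ¬G.Adj u v → H u v = 0)
    (hadj : ∀ j, G.Adj (uE j) (vE j)) (hinj : Function.Injective fun j => s(uE j, vE j))
    (hconn : (G.deleteEdges {e | ∃ j, e = s(uE j, vE j)}).Connected)
    (hcard : Fintype.card ι + Fintype.card V = G.edgeFinset.card + 1) (hf : ∀ v, f v ≠ 0)
    {l : ℝ} {A : Matrix ι ι ℝ} {θ : (ι → ℝ) →ₗ[ℝ] V → ℝ}
    (hform : ∀ a η, groundStateForm H f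
        (coboundary η + (coboundary (θ a) - edgePotential uE vE a))
        (coboundary η + (coboundary (θ a) - edgePotential uE vE a)) =
      2 * ((f * η) ⬝ᵥ H *ᵥ (f * η) - l * ((f * η) ⬝ᵥ (f * η))) + (f ⬝ᵥ f) * (a ⬝ᵥ A *ᵥ a)) :
    sigNeg (weightedSumSquares ℝ (edgeRestrict G (of fun u v => -(H u v * (f u * f v))))) =
      sigNeg (H - l • 1).toQuadraticForm' + sigNeg A.toQuadraticForm' := by
  have hff : 0 < f ⬝ᵥ f / 2 := by
    have : Nonempty V := hconn.nonempty
    exact half_pos (Finset.sum_pos (fun v _ => mul_self_pos.mpr (hf v)) Finset.univ_nonempty)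
  obtain ⟨T, hT_surj, hT⟩ := exists_surjective_apply_eq_edgeRestrict hadj hinj hconn hcard hf θ
  rw [← sigNeg_smul A.toQuadraticForm' hff, ← sigNeg_prod, ← sigNeg_comp_of_surjective _ hT_surj]
  congr 1
  ext ⟨y, a⟩
  obtain ⟨η, rfl⟩ : ∃ η, f * η = y := ⟨f⁻¹ * y, funext fun u => mul_inv_cancel_left₀ (hf u) (y u)⟩
  have hanti : (coboundary η + (coboundary (θ a) - edgePotential uE vE a))ᵀ =
      -(coboundary η + (coboundary (θ a) - edgePotential uE vE a)) := by
    simp only [transpose_add, transpose_sub, transpose_coboundary, transpose_edgePotential]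
    abel
  have hedge := groundStateForm_self_eq_weightedSumSquares hH hsupp f hanti
  rw [hform, ← hT] at hedge
  simp only [QuadraticMap.comp_apply, QuadraticMap.prod_apply, _root_.smul_apply,
    toQuadraticForm'_apply, sub_mulVec, smul_mulVec, one_mulVec, dotProduct_sub, dotProduct_smul,
    smul_eq_mul]
  linarith

end NodalCount

theorem nodal_surplus_eq_morse_index_general {N β : ℕ} {G : SimpleGraph (Fin N)}
    [DecidableRel G.Adj] {H : Matrix (Fin N) (Fin N) ℝ} (hH : H.IsSymm)
    (hsupp : ∀ u v, u ≠ v → ¬G.Adj u v → H u v = 0) {uE vE : Fin β → Fin N}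
    (hadj : ∀ j, G.Adj (uE j) (vE j)) (hinj : Function.Injective fun j => s(uE j, vE j))
    (hconn : (G.deleteEdges {e | ∃ j, e = s(uE j, vE j)}).Connected)
    (hβ : β + N = G.edgeFinset.card + 1) {f : Fin N → ℝ} {k : Fin N}
    (hsimple : Module.finrank ℝ (Module.End.eigenspace (toLin' H) (sortedEigs H k)) = 1)
    (hf : ∀ v, f v ≠ 0) (heig : H *ᵥ f = sortedEigs H k • f) {L : (Fin β → ℝ) → ℝ}
    (hL : L = fun α => sortedEigs (phaseTwist H (edgePotential uE vE α)) k) :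
    fderiv ℝ L 0 = 0 ∧ negEigCount (hessMat L 0) + k =
      {e | e ∈ G.edgeSet ∧ ∀ u v, e = s(u, v) → 0 < H u v * (f u * f v)}.ncard := by
  have hH' : H.IsHermitian := by rwa [IsHermitian, conjTranspose_eq_transpose_of_trivial]
  obtain ⟨hcrit, hhess, θ, hform⟩ := exists_phase_groundStateForm_eq hH
    (transpose_edgePotential uE vE) hsimple hf heig hL
  refine ⟨hcrit, ?_⟩
  rw [← ncard_edgeRestrict_neg hH, ← QuadraticForm.sigNeg_weightedSumSquares,
    sigNeg_weightedSumSquares_eq_add hH hsupp hadj hinj hconn (by simpa using hβ) hf hform,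
    sigNeg_toQuadraticForm'_sub_smul_one hH', ncard_sortedEigs_lt hH' hsimple.le,
    sigNeg_toQuadraticForm' hhess, add_comm]

lemma sE_eq_sortedEigs {𝕜 : Type*} [RCLike 𝕜] {d i : ℕ} (M : Matrix (Fin d) (Fin d) 𝕜)
    (hi : i < d) : sE M i = sortedEigs M ⟨i, hi⟩ :=
  dif_pos hi

section SchrodingerOperator

variable {N : ℕ} (G : SimpleGraph (Fin N)) [DecidableRel G.Adj] (q : Fin N → ℝ)

lemma schrodOp_isSymm : (schrodOp G q).IsSymm :=
  (isSymm_diagonal q).sub G.isSymm_adjMatrix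

variable {G}

lemma schrodOp_apply_of_not_adj {u v : Fin N} (hne : u ≠ v) (h : ¬G.Adj u v) :
    schrodOp G q u v = 0 := by
  simp [schrodOp, hne, h]

lemma schrodOp_apply_of_adj {u v : Fin N} (h : G.Adj u v) : schrodOp G q u v = -1 := by
  simp [schrodOp, h, h.ne]

lemma signChanges_eq_ncard_schrodOp_mul_pos (f : Fin N → ℝ) :
    signChanges G f = {e | e ∈ G.edgeSet ∧
      ∀ u v, e = s(u, v) → 0 < schrodOp G q u v * (f u * f v)}.ncard := by
  rw [signChanges]
  congr 1
  ext e
  refine and_congr_right fun he => forall₃_congr fun u v huv => ?_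
  rw [schrodOp_apply_of_adj q (huv ▸ he : s(u, v) ∈ G.edgeSet), neg_one_mul, neg_pos]

end SchrodingerOperator

/-- Main theorem: `α = 0` is a critical point of `α ↦ λ_n(H(Γ^α_mag))`, and
its Morse index equals the nodal surplus `σ = φ - (n - 1)` (stated additively as
`index + (n-1) = φ` to avoid truncated `ℕ`-subtraction). -/
theorem nodal_surplus_eq_morse_index {N β : ℕ} (G : SimpleGraph (Fin N))
    [DecidableRel G.Adj] (hconn : G.Connected) (q : Fin N → ℝ)
    (uE vE : Fin β → Fin N) (horder : ∀ j, uE j < vE j)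
    (hadj : ∀ j, G.Adj (uE j) (vE j))
    (hdistinct : ∀ i j, s(uE i, vE i) = s(uE j, vE j) → i = j)
    (htree : (G.deleteEdges {e | ∃ j, e = s(uE j, vE j)}).IsTree)
    (hβ : β + N = G.edgeFinset.card + 1)
    (n : ℕ) (hn1 : 1 ≤ n) (hn2 : n ≤ N)
    (f : Fin N → ℝ)
    (heig : (schrodOp G q).mulVec f = sE (schrodOp G q) (n - 1) • f)
    (hsimple : Module.finrank ℝ
      (Module.End.eigenspace (Matrix.toLin' (schrodOp G q)) (sE (schrodOp G q) (n - 1))) = 1)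
    (hf0 : ∀ v, f v ≠ 0)
    (φ : ℕ) (hφ : φ = signChanges G f)
    (lamMag : (Fin β → ℝ) → ℝ)
    (hlamMag : lamMag = fun α => sE (schrodMag G q uE vE α) (n - 1)) :
    fderiv ℝ lamMag 0 = 0 ∧
    negEigCount (hessMat lamMag 0) + (n - 1) = φ := by
  have hn : n - 1 < N := by omega
  rw [sE_eq_sortedEigs _ hn] at heig hsimple
  simp only [sE_eq_sortedEigs _ hn, schrodMag_eq_phaseTwist G q hadj hdistinct] at hlamMag
  rw [hφ, signChanges_eq_ncard_schrodOp_mul_pos q]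
  exact nodal_surplus_eq_morse_index_general (k := ⟨n - 1, hn⟩) (schrodOp_isSymm G q)
    (fun _ _ => schrodOp_apply_of_not_adj q) hadj hdistinct htree.connected hβ hsimple hf0 heig
    hlamMag
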